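/- Any billiard trajectory in the polyhedral cone Q experiences at most n!·(4/λ_min)^(n−1) reflections; that is, if p₁,…,p_N, v₀,…,v_N, i₁,…,i_N form a billiard trajectory in Q with N reflections, then N ≤ n!·(4/λ_min)^(n−1). -/

import Mathlib

open RealInnerProductSpace

/-- Velocity data of a billiard trajectory (0-indexed) hitting only walls in `S`. -/
structure VelTraj {ι E : Type*} [NormedAddCommGroup E] [InnerProductSpace ℝ E]
    (α : ι → E) (S : Finset ι) (N : ℕ) (v : ℕ → E) (idx : ℕ → ι) : Prop where
  mem : ∀ k < N, idx k ∈ S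
  neg : ∀ k < N, ⟪v k, α (idx k)⟫ < 0
  refl : ∀ k < N, v (k + 1) = v k - (2 * ⟪v k, α (idx k)⟫) • α (idx k)

lemma windows_sum (a : ℕ → ℝ) (N L : ℕ) (ha : ∀ k < N, 0 ≤ a k) (δ : ℝ)
    (h : ∀ s, s + L ≤ N → δ ≤ ∑ k ∈ Finset.Ico s (s + L), a k) :
    ((N / L : ℕ) : ℝ) * δ ≤ ∑ k ∈ Finset.range N, a k := by
  have key : ∀ K : ℕ, K * L ≤ N → (K : ℝ) * δ ≤ ∑ k ∈ Finset.range (K * L), a k := by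
    intro K
    induction K with
    | zero => intro _; simp
    | succ K ih =>
      intro hK
      have e : (K + 1) * L = K * L + L := by ring
      rw [e] at hK ⊢
      have h1 := ih (by omega)
      have h2 := h _ hK
      rw [Finset.range_eq_Ico] at h1 ⊢
      rw [← Finset.sum_Ico_consecutive a (Nat.zero_le _) (Nat.le_add_right (K * L) L)]
      push_cast
      linarith
  have hle : N / L * L ≤ N := Nat.div_mul_le_self N L
  refine (key _ hle).trans ?_
  apply Finset.sum_le_sum_of_subset_of_nonneg
  · intro x hx; simp only [Finset.mem_range] at *; omega
  · intro i hi _; exact ha i (Finset.mem_range.1 hi)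

section
variable {ι E : Type*} [NormedAddCommGroup E] [InnerProductSpace ℝ E]

lemma frame_lower (α : ι → E) (S : Finset ι) (lam : ℝ) (hl : 0 < lam)
    (hlam : ∀ ξ : ι → ℝ, lam * ∑ i ∈ S, ξ i ^ 2 ≤ ‖∑ i ∈ S, ξ i • α i‖ ^ 2)
    (u : E) (hu : ∃ ξ : ι → ℝ, ∑ i ∈ S, ξ i • α i = u) :
    lam * ‖u‖ ^ 2 ≤ ∑ i ∈ S, ⟪u, α i⟫ ^ 2 := by
  obtain ⟨ξ, hξ⟩ := hu
  have h1 := hlam ξ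
  rw [hξ] at h1
  have h2 : ‖u‖ ^ 2 = ∑ i ∈ S, ξ i * ⟪u, α i⟫ := by
    rw [← real_inner_self_eq_norm_sq]
    nth_rewrite 2 [← hξ]
    rw [inner_sum]
    simp [real_inner_smul_right]
  have h3 := Finset.sum_mul_sq_le_sq_mul_sq S ξ (fun i => ⟪u, α i⟫)
  rw [← h2] at h3
  set A := ∑ i ∈ S, ξ i ^ 2
  set B := ∑ i ∈ S, ⟪u, α i⟫ ^ 2
  have hB : 0 ≤ B := Finset.sum_nonneg fun i _ => sq_nonneg _
  rcases eq_or_ne u 0 with h0 | h0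
  · simp [h0, hB]
  · have hp : 0 < ‖u‖ ^ 2 := by positivity
    have h4 : ‖u‖ ^ 2 * (lam * ‖u‖ ^ 2) ≤ ‖u‖ ^ 2 * B := by nlinarith
    exact le_of_mul_le_mul_left h4 hp

variable {α : ι → E} {S : Finset ι} {N : ℕ} {v : ℕ → E} {idx : ℕ → ι}

lemma VelTraj.flip (hT : VelTraj α S N v idx) (hunit : ∀ i, ‖α i‖ = 1) (k : ℕ) (hk : k < N) :
    ⟪v (k + 1), α (idx k)⟫ = - ⟪v k, α (idx k)⟫ := by
  rw [hT.refl k hk, inner_sub_left, real_inner_smul_left, real_inner_self_eq_norm_sq, hunit]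
  ring

lemma VelTraj.norm_eq (hT : VelTraj α S N v idx) (hunit : ∀ i, ‖α i‖ = 1) :
    ∀ k ≤ N, ‖v k‖ = ‖v 0‖ := by
  intro k
  induction k with
  | zero => intro _; rfl
  | succ k ih =>
    intro hk
    rw [← ih (by omega)]
    have : ‖v (k + 1)‖ ^ 2 = ‖v k‖ ^ 2 := by
      rw [hT.refl k (by omega), norm_sub_sq_real, norm_smul, hunit, real_inner_smul_right,
        Real.norm_eq_abs, mul_one, sq_abs]
      ring
    exact (sq_eq_sq₀ (norm_nonneg _) (norm_nonneg _)).1 this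

lemma VelTraj.dist_le (hT : VelTraj α S N v idx) (hunit : ∀ i, ‖α i‖ = 1) (a b : ℕ)
    (hab : a ≤ b) (hb : b ≤ N) :
    ‖v a - v b‖ ≤ ∑ k ∈ Finset.Ico a b, (-2 * ⟪v k, α (idx k)⟫) := by
  rw [← dist_eq_norm]
  apply dist_le_Ico_sum_of_dist_le hab
  intro k _ hk
  have := hT.neg k (by omega)
  rw [hT.refl k (by omega), dist_eq_norm, sub_sub_cancel, norm_smul, hunit, Real.norm_eq_abs,
    abs_of_neg (by linarith)]
  linarith

lemma VelTraj.sum_sq_le [DecidableEq ι] (hT : VelTraj α S N v idx) (hunit : ∀ i, ‖α i‖ = 1)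
    (lam : ℝ) (hl : 0 < lam)
    (hlam : ∀ ξ : ι → ℝ, lam * ∑ i ∈ S, ξ i ^ 2 ≤ ‖∑ i ∈ S, ξ i • α i‖ ^ 2) :
    lam * (∑ k ∈ Finset.range N, (-2 * ⟪v k, α (idx k)⟫)) ^ 2 ≤ 4 * S.card * ‖v 0‖ ^ 2 := by
  set a : ℕ → ℝ := fun k => -2 * ⟪v k, α (idx k)⟫ with ha
  have hmaps : ∀ k ∈ Finset.range N, idx k ∈ S := fun k hk => hT.mem k (Finset.mem_range.1 hk)
  set s : ι → ℝ := fun i => ∑ k ∈ Finset.range N with idx k = i, a k with hs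
  have h1 : ∑ i ∈ S, s i = ∑ k ∈ Finset.range N, a k := Finset.sum_fiberwise_of_maps_to hmaps a
  have h2 : ∑ i ∈ S, s i • α i = v N - v 0 := by
    have e1 : ∑ k ∈ Finset.range N, a k • α (idx k) = v N - v 0 := by
      rw [← Finset.sum_range_sub]
      apply Finset.sum_congr rfl
      intro k hk
      rw [hT.refl k (Finset.mem_range.1 hk), sub_sub_cancel_left, ← neg_smul]
      congr 1
      simp only [ha]; ring
    rw [← e1, ← Finset.sum_fiberwise_of_maps_to hmaps]
    apply Finset.sum_congr rfl
    intro i _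
    rw [hs, Finset.sum_smul]
    apply Finset.sum_congr rfl
    intro k hk
    rw [(Finset.mem_filter.1 hk).2]
  have h3 := hlam s
  rw [h2] at h3
  have h4 : ‖v N - v 0‖ ≤ 2 * ‖v 0‖ := by
    have := norm_sub_le (v N) (v 0)
    rw [hT.norm_eq hunit N le_rfl] at this
    linarith
  have h5 : ‖v N - v 0‖ ^ 2 ≤ (2 * ‖v 0‖) ^ 2 := by gcongr
  have h6 := sq_sum_le_card_mul_sum_sq (s := S) (f := s)
  rw [h1] at h6
  have hc : (0 : ℝ) ≤ S.card := Nat.cast_nonneg _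
  calc lam * (∑ k ∈ Finset.range N, a k) ^ 2 ≤ lam * (S.card * ∑ i ∈ S, s i ^ 2) := by gcongr
    _ = S.card * (lam * ∑ i ∈ S, s i ^ 2) := by ring
    _ ≤ S.card * (2 * ‖v 0‖) ^ 2 := by gcongr; exact h3.trans h5
    _ = _ := by ring

/-- If each window of length `L` has variation at least `δ`, with `δ² = c λ ‖v‖²/|S|`, the number
of windows is bounded. -/
lemma VelTraj.window_count [DecidableEq ι] (hT : VelTraj α S N v idx) (hunit : ∀ i, ‖α i‖ = 1)
    (lam : ℝ) (hl : 0 < lam)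
    (hlam : ∀ ξ : ι → ℝ, lam * ∑ i ∈ S, ξ i ^ 2 ≤ ‖∑ i ∈ S, ξ i • α i‖ ^ 2)
    (hS : 0 < S.card) (hv0 : v 0 ≠ 0) (L : ℕ) (c : ℝ) (hc : 0 < c)
    (h : ∀ s, s + L ≤ N → c * ‖v 0‖ * √(lam / S.card) ≤
      ∑ k ∈ Finset.Ico s (s + L), (-2 * ⟪v k, α (idx k)⟫)) :
    c * ((N / L : ℕ) : ℝ) ≤ 2 * S.card / lam := by
  have h1 := windows_sum _ N L (fun k hk => by have := hT.neg k hk; linarith) _ h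
  have h2 := hT.sum_sq_le hunit lam hl hlam
  set K : ℝ := ((N / L : ℕ) : ℝ)
  have hK : 0 ≤ K := Nat.cast_nonneg _
  have hc' : (0 : ℝ) < S.card := by exact_mod_cast hS
  have hn : 0 < ‖v 0‖ := norm_pos_iff.2 hv0
  have h3 : (K * (c * ‖v 0‖ * √(lam / S.card))) ^ 2 ≤
    (∑ k ∈ Finset.range N, (-2 * ⟪v k, α (idx k)⟫)) ^ 2 := by gcongr
  have h4 : (K * (c * ‖v 0‖ * √(lam / S.card))) ^ 2 = (K * c) ^ 2 * ‖v 0‖ ^ 2 * (lam / S.card) := by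
    have : (√(lam / S.card)) ^ 2 = lam / S.card := Real.sq_sqrt (by positivity)
    rw [mul_pow, mul_pow, this]; ring
  rw [h4] at h3
  have h5 : lam * ((K * c) ^ 2 * ‖v 0‖ ^ 2 * (lam / S.card)) ≤ 4 * S.card * ‖v 0‖ ^ 2 :=
    (mul_le_mul_of_nonneg_left h3 hl.le).trans h2
  have h6 : (c * K * lam) ^ 2 ≤ (2 * S.card) ^ 2 := by
    have e : lam * ((K * c) ^ 2 * ‖v 0‖ ^ 2 * (lam / S.card)) =
      ((c * K * lam) ^ 2) * (‖v 0‖ ^ 2 / S.card) := by field_simp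
    have e2 : 4 * S.card * ‖v 0‖ ^ 2 = ((2 * S.card) ^ 2) * (‖v 0‖ ^ 2 / S.card) := by
      field_simp; ring
    rw [e, e2] at h5
    exact le_of_mul_le_mul_right h5 (by positivity)
  rw [le_div_iff₀ hl]
  exact (sq_le_sq₀ (by positivity) (by positivity)).1 h6

lemma VelTraj.window_ge (hT : VelTraj α S N v idx) (hunit : ∀ i, ‖α i‖ = 1)
    (lam : ℝ) (hl : 0 < lam)
    (hlam : ∀ ξ : ι → ℝ, lam * ∑ i ∈ S, ξ i ^ 2 ≤ ‖∑ i ∈ S, ξ i • α i‖ ^ 2)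
    (hS : 0 < S.card) (hspan : ∀ k, ∃ ξ : ι → ℝ, ∑ i ∈ S, ξ i • α i = v k)
    (s L : ℕ) (hsL : s + L ≤ N) (hhit : ∀ i ∈ S, ∃ k, s ≤ k ∧ k < s + L ∧ idx k = i) :
    ‖v 0‖ * √(lam / S.card) ≤ ∑ k ∈ Finset.Ico s (s + L), (-2 * ⟪v k, α (idx k)⟫) := by
  have hfr := frame_lower α S lam hl hlam (v s) (hspan s)
  rw [hT.norm_eq hunit s (by omega)] at hfr
  have hc' : (0 : ℝ) < S.card := by exact_mod_cast hS
  obtain ⟨i, hi, hbig⟩ : ∃ i ∈ S, lam * ‖v 0‖ ^ 2 / S.card ≤ ⟪v s, α i⟫ ^ 2 := by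
    apply Finset.exists_le_of_sum_le (Finset.card_pos.1 hS)
    rw [Finset.sum_const, nsmul_eq_mul]
    have e : (S.card : ℝ) * (lam * ‖v 0‖ ^ 2 / S.card) = lam * ‖v 0‖ ^ 2 := by field_simp
    rw [e]; exact hfr
  have hbig' : ‖v 0‖ * √(lam / S.card) ≤ |⟪v s, α i⟫| := by
    rw [← Real.sqrt_sq_eq_abs]
    apply Real.le_sqrt_of_sq_le
    rw [mul_pow, Real.sq_sqrt (by positivity)]
    convert hbig using 1; ring
  refine hbig'.trans ?_
  obtain ⟨k, hk1, hk2, rfl⟩ := hhit i hi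
  have hbd : ∀ b, s ≤ b → b ≤ s + L → |⟪v s, α (idx k)⟫ - ⟪v b, α (idx k)⟫| ≤
      ∑ k ∈ Finset.Ico s (s + L), (-2 * ⟪v k, α (idx k)⟫) := by
    intro b hb1 hb2
    rw [← inner_sub_left]
    refine (abs_real_inner_le_norm _ _).trans ?_
    rw [hunit, mul_one]
    refine (hT.dist_le hunit s b hb1 (by omega)).trans ?_
    apply Finset.sum_le_sum_of_subset_of_nonneg
    · exact Finset.Ico_subset_Ico le_rfl hb2
    · intro j hj _
      have := hT.neg j (by have := (Finset.mem_Ico.1 hj).2; omega)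
      linarith
  have b1 := abs_le.1 (hbd k hk1 hk2.le)
  have b2 := abs_le.1 (hbd (k + 1) (by omega) (by omega))
  rw [hT.flip hunit k (by omega)] at b2
  have hneg := hT.neg k (by omega)
  rw [abs_le]
  constructor <;> linarith [b1.1, b1.2, b2.1, b2.2]

lemma VelTraj.window_two (hT : VelTraj α S N v idx) (hunit : ∀ i, ‖α i‖ = 1)
    (lam : ℝ) (hl : 0 < lam)
    (hlam : ∀ ξ : ι → ℝ, lam * ∑ i ∈ S, ξ i ^ 2 ≤ ‖∑ i ∈ S, ξ i • α i‖ ^ 2)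
    (hS : S.card = 2) (hspan : ∀ k, ∃ ξ : ι → ℝ, ∑ i ∈ S, ξ i • α i = v k)
    (s : ℕ) (hsL : s + 2 ≤ N) :
    2 * ‖v 0‖ * √(lam / S.card) ≤ ∑ k ∈ Finset.Ico s (s + 2), (-2 * ⟪v k, α (idx k)⟫) := by
  classical
  have hfr := frame_lower α S lam hl hlam (v (s + 1)) (hspan _)
  rw [hT.norm_eq hunit _ (by omega)] at hfr
  have hf := hT.flip hunit s (by omega)
  have n1 := hT.neg s (by omega)
  have n2 := hT.neg (s + 1) (by omega)
  have hne : idx s ≠ idx (s + 1) := by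
    intro h; rw [← h] at n2; linarith
  have hSe : S = {idx s, idx (s + 1)} := by
    symm
    apply Finset.eq_of_subset_of_card_le
    · intro x hx
      simp only [Finset.mem_insert, Finset.mem_singleton] at hx
      rcases hx with rfl | rfl
      · exact hT.mem _ (by omega)
      · exact hT.mem _ (by omega)
    · rw [hS, Finset.card_pair hne]
  have e : ∑ i ∈ S, ⟪v (s + 1), α i⟫ ^ 2 =
      ⟪v s, α (idx s)⟫ ^ 2 + ⟪v (s + 1), α (idx (s + 1))⟫ ^ 2 := by
    rw [hSe, Finset.sum_pair hne, hf]; ring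
  rw [e] at hfr
  rw [Finset.sum_Ico_eq_sum_range]
  simp only [Nat.add_sub_cancel_left, Finset.sum_range_succ, Finset.sum_range_zero, add_zero,
    zero_add]
  refine le_of_abs_le (abs_le_of_sq_le_sq ?_ (by linarith))
  rw [mul_pow, Real.sq_sqrt (by positivity), hS]
  push_cast
  nlinarith [mul_pos_of_neg_of_neg n1 n2, mul_nonneg hl.le (sq_nonneg ‖v 0‖)]

lemma VelTraj.proj [FiniteDimensional ℝ E] (hT : VelTraj α S N v idx) :
    ∃ u : ℕ → E, VelTraj α S N u idx ∧ ∀ k, ∃ ξ : ι → ℝ, ∑ i ∈ S, ξ i • α i = u k := by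
  classical
  set W : Submodule ℝ E := Submodule.span ℝ (α '' (S : Set ι)) with hW
  have hin : ∀ x, ∀ i ∈ S, ⟪W.starProjection x, α i⟫ = ⟪x, α i⟫ := by
    intro x i hi
    rw [Submodule.inner_starProjection_left_eq_right, Submodule.starProjection_eq_self_iff.2]
    exact Submodule.subset_span ⟨i, hi, rfl⟩
  refine ⟨fun k => W.starProjection (v k), ⟨hT.mem, ?_, ?_⟩, ?_⟩
  · intro k hk
    rw [hin _ _ (hT.mem k hk)]
    exact hT.neg k hk
  · intro k hk
    rw [hin _ _ (hT.mem k hk), hT.refl k hk, map_sub, map_smul]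
    congr 2
    exact Submodule.starProjection_eq_self_iff.2 (Submodule.subset_span ⟨_, hT.mem k hk, rfl⟩)
  · intro k
    have hm : W.starProjection (v k) ∈ W := Submodule.starProjection_apply_mem W (v k)
    rw [hW, Submodule.mem_span_image_finset_iff_exists_fun] at hm
    obtain ⟨c, hc⟩ := hm
    refine ⟨fun i => if h : i ∈ S then c ⟨i, h⟩ else 0, ?_⟩
    simp only
    rw [← hc, ← Finset.sum_coe_sort S]
    apply Finset.sum_congr rfl
    intro i _
    simp

lemma VelTraj.shift (hT : VelTraj α S N v idx) (s L : ℕ) (h : s + L ≤ N) (S' : Finset ι)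
    (hS' : ∀ k, s ≤ k → k < s + L → idx k ∈ S') :
    VelTraj α S' L (fun k => v (s + k)) (fun k => idx (s + k)) :=
  ⟨fun k hk => hS' _ (by omega) (by omega), fun k hk => hT.neg _ (by omega),
    fun k hk => hT.refl (s + k) (by omega)⟩

lemma VelTraj.bound [FiniteDimensional ℝ E] (hunit : ∀ i, ‖α i‖ = 1)
    (lam : ℝ) (hl : 0 < lam) (hl1 : lam ≤ 1)
    (hlam : ∀ (S : Finset ι) (ξ : ι → ℝ),
      lam * ∑ i ∈ S, ξ i ^ 2 ≤ ‖∑ i ∈ S, ξ i • α i‖ ^ 2) (c : ℕ) :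
    ∀ (S : Finset ι) (N : ℕ) (v : ℕ → E) (idx : ℕ → ι), S.card = c → VelTraj α S N v idx →
      (N : ℝ) ≤ (c.factorial : ℝ) * (4 / lam) ^ (c - 1) := by
  classical
  have h4 : 4 ≤ 4 / lam := by rw [le_div_iff₀ hl]; linarith
  induction c with
  | zero =>
    intro S N v idx hS hT
    rcases Nat.eq_zero_or_pos N with rfl | hN
    · simp
    · have := hT.mem 0 hN
      rw [Finset.card_eq_zero.1 hS] at this
      simp at this
  | succ c ih =>
    intro S N v' idx hS hT'
    rcases Nat.eq_zero_or_pos N with rfl | hN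
    · simp only [Nat.cast_zero]; positivity
    obtain ⟨v, hT, hspan⟩ := hT'.proj
    have hv0 : v 0 ≠ 0 := by
      intro h
      have := hT.neg 0 hN
      rw [h, inner_zero_left] at this
      exact lt_irrefl _ this
    have hSpos : 0 < S.card := by omega
    obtain rfl | rfl | hc : c = 0 ∨ c = 1 ∨ 2 ≤ c := by omega
    · -- a single wall cannot be hit twice in a row
      have : N ≤ 1 := by
        by_contra hN2
        have hf := hT.flip hunit 0 hN
        have n1 := hT.neg 0 hN
        have n2 := hT.neg 1 (by omega)
        have : idx 0 = idx 1 :=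
          Finset.card_le_one.1 (by omega) _ (hT.mem 0 hN) _ (hT.mem 1 (by omega))
        rw [← this] at n2
        simp only [zero_add] at hf
        linarith
      simpa using this
    · have h1 := hT.window_count hunit lam hl (hlam S) hSpos hv0 2 2 (by norm_num)
        (fun s hs => hT.window_two hunit lam hl (hlam S) hS hspan s hs)
      have h2 : N ≤ 2 * (N / 2) + 1 := by omega
      have h3 : (N : ℝ) ≤ 2 * ((N / 2 : ℕ) : ℝ) + 1 := by exact_mod_cast h2
      rw [hS] at h1
      have e : (2 : ℝ) * ((1 + 1 : ℕ) : ℝ) / lam = 4 / lam := by norm_num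
      rw [e] at h1
      norm_num [Nat.factorial]
      linarith
    · set F : ℝ := (c.factorial : ℝ) * (4 / lam) ^ (c - 1) with hF
      have hF0 : 0 ≤ F := by positivity
      have hF2 : 2 ≤ F := by
        have a1 : (1 : ℝ) ≤ c.factorial := by exact_mod_cast Nat.one_le_iff_ne_zero.2 (Nat.factorial_ne_zero c)
        have a2 : 4 / lam ≤ (4 / lam) ^ (c - 1) := le_self_pow₀ (by linarith) (by omega)
        rw [hF]; nlinarith
      set L : ℕ := ⌊F⌋₊ + 1 with hL
      have hhit : ∀ s, s + L ≤ N → ∀ i ∈ S, ∃ k, s ≤ k ∧ k < s + L ∧ idx k = i := by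
        intro s hs i hi
        by_contra hcon
        push Not at hcon
        have hT2 := hT.shift s L hs (S.erase i) (fun k h1 h2 =>
          Finset.mem_erase.2 ⟨hcon k h1 h2, hT.mem k (by omega)⟩)
        have := ih (S.erase i) L _ _ (by rw [Finset.card_erase_of_mem hi, hS]; rfl) hT2
        have h2 := Nat.lt_floor_add_one F
        rw [hL] at this
        push_cast at this
        linarith
      have h1 := hT.window_count hunit lam hl (hlam S) hSpos hv0 L 1 (by norm_num)
        (fun s hs => by
          rw [one_mul]
          exact hT.window_ge hunit lam hl (hlam S) hSpos hspan s L hs (hhit s hs))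
      have h2 : N ≤ L * (N / L) + ⌊F⌋₊ := by
        have a1 := Nat.div_add_mod N L
        have a2 := Nat.mod_lt N (show 0 < L by omega)
        omega
      have h3 : (N : ℝ) ≤ L * ((N / L : ℕ) : ℝ) + ⌊F⌋₊ := by exact_mod_cast h2
      have h5 : (⌊F⌋₊ : ℝ) ≤ F := Nat.floor_le hF0
      have h6 : (L : ℝ) ≤ F + 1 := by rw [hL]; push_cast; linarith
      set K : ℝ := ((N / L : ℕ) : ℝ)
      have hK : 0 ≤ K := Nat.cast_nonneg _
      rw [one_mul, hS] at h1
      have hgoal : ((c + 1).factorial : ℝ) * (4 / lam) ^ (c + 1 - 1) =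
          2 * (2 * ((c + 1 : ℕ) : ℝ) / lam) * F := by
        obtain ⟨d, rfl⟩ : ∃ d, c = d + 1 := ⟨c - 1, by omega⟩
        rw [hF, Nat.factorial_succ]
        simp only [Nat.add_sub_cancel, pow_succ]
        push_cast
        ring
      rw [hgoal]
      set X : ℝ := 2 * ((c + 1 : ℕ) : ℝ) / lam
      have hX : 2 ≤ X := by
        have : (3 : ℝ) ≤ ((c + 1 : ℕ) : ℝ) := by exact_mod_cast (by omega : 3 ≤ c + 1)
        rw [le_div_iff₀ hl]; nlinarith
      have h7 : (L : ℝ) * K ≤ (F + 1) * X := by gcongr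
      nlinarith

end

/-- Any billiard trajectory in the polyhedral cone
`Q = {y : ∀ i, ⟪y, α i⟫ ≥ 0}` determined by linearly independent unit normals
`α 1, …, α n` experiences at most `n! * (4 / λ_min)^(n-1)` reflections, where `λ_min`
is the smallest eigenvalue of the Gram matrix `G = (⟪α i, α j⟫)`.
The trajectory is 1-indexed: reflection points `p 1, …, p N`, unit velocities
`v 0, v 1, …, v N` and wall indices `idx 1, …, idx N`. -/
theorem billiard_reflections_le_factorial_mul_pow
    (n m N : ℕ) (α : Fin n → EuclideanSpace ℝ (Fin m))
    (hα : LinearIndependent ℝ α) (hunit : ∀ i, ‖α i‖ = 1)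
    (G : Matrix (Fin n) (Fin n) ℝ) (hG : ∀ i j, G i j = ⟪α i, α j⟫)
    (lam : ℝ)
    (hEig : ∃ ξ : Fin n → ℝ, ξ ≠ 0 ∧ G.mulVec ξ = lam • ξ)
    (hMin : ∀ (μ : ℝ) (ξ : Fin n → ℝ), ξ ≠ 0 → G.mulVec ξ = μ • ξ → lam ≤ μ)
    (p v : ℕ → EuclideanSpace ℝ (Fin m)) (idx : ℕ → Fin n) (t : ℕ → ℝ)
    (hv : ∀ k ≤ N, ‖v k‖ = 1)
    (hpQ : ∀ k, 1 ≤ k → k ≤ N → ∀ i, 0 ≤ ⟪p k, α i⟫)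
    (hwall : ∀ k, 1 ≤ k → k ≤ N → ⟪p k, α (idx k)⟫ = 0)
    (happroach : ∀ k, 1 ≤ k → k ≤ N → ⟪v (k - 1), α (idx k)⟫ < 0)
    (hreflect : ∀ k, 1 ≤ k → k ≤ N →
      v k = v (k - 1) - (2 * ⟪v (k - 1), α (idx k)⟫) • α (idx k))
    (ht : ∀ k, 1 ≤ k → k < N → 0 < t k ∧ p (k + 1) = p k + t k • v k) :
    (N : ℝ) ≤ (n.factorial : ℝ) * (4 / lam) ^ (n - 1) := by
  classical
  have hquad : ∀ ξ : Fin n → ℝ, ξ ⬝ᵥ G.mulVec ξ = ‖∑ i, ξ i • α i‖ ^ 2 := by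
    intro ξ
    rw [← real_inner_self_eq_norm_sq, sum_inner]
    simp only [inner_sum, real_inner_smul_left, real_inner_smul_right, dotProduct,
      Matrix.mulVec, hG, Finset.mul_sum]
    apply Finset.sum_congr rfl; intro i _
    apply Finset.sum_congr rfl; intro j _
    ring
  have hl : 0 < lam := by
    obtain ⟨ξ, hξ, he⟩ := hEig
    have h1 := hquad ξ
    rw [he, dotProduct_smul, smul_eq_mul] at h1
    have h2 : 0 < ξ ⬝ᵥ ξ := by
      have : 0 ≤ ξ ⬝ᵥ ξ := Finset.sum_nonneg fun i _ => mul_self_nonneg _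
      exact lt_of_le_of_ne this (fun h => hξ (dotProduct_self_eq_zero.1 h.symm))
    have h3 : ∑ i, ξ i • α i ≠ 0 := by
      intro h
      apply hξ
      funext i
      exact Fintype.linearIndependent_iff.1 hα ξ h i
    have h4 : 0 < ‖∑ i, ξ i • α i‖ ^ 2 := by
      have := norm_pos_iff.2 h3
      positivity
    rw [← h1] at h4
    exact pos_of_mul_pos_left h4 h2.le
  have hherm : (G - lam • (1 : Matrix (Fin n) (Fin n) ℝ)).IsHermitian := by
    ext i j
    simp only [Matrix.conjTranspose_apply, Matrix.sub_apply, Matrix.smul_apply, hG, star_trivial,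
      Matrix.one_apply, real_inner_comm, eq_comm]
  have hpsd : (G - lam • (1 : Matrix (Fin n) (Fin n) ℝ)).PosSemidef := by
    rw [hherm.posSemidef_iff_eigenvalues_nonneg]
    intro j
    have h1 := hherm.mulVec_eigenvectorBasis j
    rw [Matrix.sub_mulVec, Matrix.smul_mulVec, Matrix.one_mulVec, sub_eq_iff_eq_add,
      ← add_smul] at h1
    have hne : (hherm.eigenvectorBasis j).ofLp ≠ 0 := by
      intro h
      have h2 := hherm.eigenvectorBasis.orthonormal.ne_zero j
      apply h2
      ext i
      simp [h]
    have := hMin _ _ hne h1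
    simp only [Pi.zero_apply]
    linarith
  have hfull : ∀ ξ : Fin n → ℝ, lam * ∑ i, ξ i ^ 2 ≤ ‖∑ i, ξ i • α i‖ ^ 2 := by
    intro ξ
    have h1 := hpsd.dotProduct_mulVec_nonneg ξ
    rw [star_trivial, Matrix.sub_mulVec, Matrix.smul_mulVec, Matrix.one_mulVec, dotProduct_sub,
      hquad, dotProduct_smul, smul_eq_mul] at h1
    have h2 : ξ ⬝ᵥ ξ = ∑ i, ξ i ^ 2 := by
      simp only [dotProduct, pow_two]
    rw [h2] at h1
    linarith
  have hsub : ∀ (S : Finset (Fin n)) (ξ : Fin n → ℝ),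
      lam * ∑ i ∈ S, ξ i ^ 2 ≤ ‖∑ i ∈ S, ξ i • α i‖ ^ 2 := by
    intro S ξ
    have := hfull (fun i => if i ∈ S then ξ i else 0)
    simpa [ite_smul, ite_pow, Finset.sum_ite_mem] using this
  have hl1 : lam ≤ 1 := by
    have := hsub {idx 0} (fun _ => 1)
    simpa [hunit] using this
  have hT : VelTraj α Finset.univ N v (fun k => idx (k + 1)) :=
    ⟨fun k _ => Finset.mem_univ _, fun k hk => happroach (k + 1) (by omega) (by omega),
      fun k hk => hreflect (k + 1) (by omega) (by omega)⟩
  exact VelTraj.bound hunit lam hl hl1 hsub n _ _ _ _ (by simp) hT
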